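/- There is no l₀-Luzin set: for every set L ⊆ ω^ω there exists a set A ∈ l₀ such that the cardinality of A ∩ L equals the cardinality of L. -/

import Mathlib

open Cardinal Set

/-- A tree on ω: a nonempty set of finite sequences closed under initial segments. -/
def IsTree (T : Set (List ℕ)) : Prop :=
  T.Nonempty ∧ ∀ s ∈ T, ∀ n : ℕ, s.take n ∈ T

/-- The body of a tree: all infinite branches. -/
def treeBody (T : Set (List ℕ)) : Set (ℕ → ℕ) :=
  {x | ∀ n : ℕ, (List.ofFn fun i : Fin n => x i) ∈ T}

/-- Immediate successors of a node in a tree. -/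
def succs (T : Set (List ℕ)) (t : List ℕ) : Set ℕ := {n | t ++ [n] ∈ T}

/-- Sacks (perfect) tree: every node has an extension with at least two immediate successors. -/
def IsSacksTree (T : Set (List ℕ)) : Prop :=
  IsTree T ∧ ∀ s ∈ T, ∃ t ∈ T, s <+: t ∧ (succs T t).Nontrivial

/-- Miller tree: every node has an extension with infinitely many immediate successors. -/
def IsMillerTree (T : Set (List ℕ)) : Prop :=
  IsTree T ∧ ∀ s ∈ T, ∃ t ∈ T, s <+: t ∧ (succs T t).Infinite

/-- Laver tree: has a stem (a node comparable with every node) such that every node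
extending the stem has infinitely many immediate successors. -/
def IsLaverTree (T : Set (List ℕ)) : Prop :=
  IsTree T ∧ ∃ s ∈ T, (∀ t ∈ T, s <+: t ∨ t <+: s) ∧
    ∀ t ∈ T, s <+: t → (succs T t).Infinite

/-- Complete Laver tree: every node has infinitely many immediate successors. -/
def IsCompleteLaverTree (T : Set (List ℕ)) : Prop :=
  IsTree T ∧ ∀ t ∈ T, (succs T t).Infinite

/-- The tree ideal t₀ associated with a family of trees 𝕋. -/
def treeIdeal (𝕋 : Set (Set (List ℕ))) : Set (Set (ℕ → ℕ)) :=
  {A | ∀ P ∈ 𝕋, ∃ Q ∈ 𝕋, Q ⊆ P ∧ treeBody Q ∩ A = ∅}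

/-- t-measurability with respect to a family of trees 𝕋. -/
def TMeasurable (𝕋 : Set (Set (List ℕ))) (A : Set (ℕ → ℕ)) : Prop :=
  ∀ P ∈ 𝕋, ∃ Q ∈ 𝕋, Q ⊆ P ∧ (treeBody Q ⊆ A ∨ treeBody Q ∩ A = ∅)

/-- 𝕋-Bernstein set: meets and omits the body of every tree in 𝕋. -/
def TBernstein (𝕋 : Set (Set (List ℕ))) (B : Set (ℕ → ℕ)) : Prop :=
  ∀ T ∈ 𝕋, (B ∩ treeBody T).Nonempty ∧ (B \ treeBody T).Nonempty

/-!
Fix a Laver tree `P` and label the immediate successors of each of its nodes by basic clopen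
subsets of the Cantor space, in such a way that for every point `x` the successors whose label
contains `x` span a Laver subtree `T x` of `P`. Conversely, every Laver tree can be thinned out so
that the labels above a node `t` converge to a point `z t`. For `x` outside the countable set of all
`z t`, a branch `y` of the thinned tree that belongs to `T x` has `z (y ↾ n) → x`, and it leaves the
value `z (y ↾ m)` at a node where the sequence `z (y ↾ n)` jumps exactly at the first difference of
`x` and `z (y ↾ m)`. A further thinning makes the place of a jump determine the node, so that
each such `x` has only countably many such branches.

If `L` is not in the ideal, choose `P` so that `L` meets all its Laver subtrees in `𝔠` many
points. Fewer than `𝔠` thinned trees exclude fewer than `𝔠` many `x`, and for any remaining `x` they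
cover fewer than `𝔠` points of `T x`. A transfinite recursion along all Laver trees therefore picks
`𝔠` many points of `L` such that fewer than `𝔠` of them lie in the thinning of each Laver tree.
-/

open scoped Topology

/-! ### Initial segments and Laver trees given by successor sets -/

/-- The initial segment `x ↾ n` of an infinite sequence, as a list of length `n`. -/
def initSeg {α : Type*} (x : ℕ → α) (n : ℕ) : List α := List.ofFn fun i : Fin n => x i

section InitSeg

variable {α : Type*}

@[simp]
lemma length_initSeg (x : ℕ → α) (n : ℕ) : (initSeg x n).length = n := List.length_ofFn

lemma initSeg_succ (x : ℕ → α) (n : ℕ) : initSeg x (n + 1) = initSeg x n ++ [x n] :=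
  List.ofFn_succ_last

lemma initSeg_eq_initSeg_iff {x y : ℕ → α} {n : ℕ} :
    initSeg x n = initSeg y n ↔ ∀ i < n, x i = y i := by
  rw [initSeg, initSeg, List.ofFn_inj, funext_iff, Fin.forall_iff]

end InitSeg

lemma treeBody_mono {S T : Set (List ℕ)} (h : S ⊆ T) : treeBody S ⊆ treeBody T :=
  fun _ hx n => h (hx n)

lemma IsTree.mem_of_prefix {T : Set (List ℕ)} (hT : IsTree T) {s t : List ℕ} (ht : t ∈ T)
    (hst : s <+: t) : s ∈ T :=
  List.prefix_iff_eq_take.1 hst ▸ hT.2 t ht s.length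

lemma exists_forall_infinite_eq_of_infinite {ι α : Type*} [Infinite α] (S : ι → Set α) :
    ∃ E : ι → Set α, (∀ t, (E t).Infinite) ∧ ∀ t, (S t).Infinite → E t = S t := by
  classical
  refine ⟨fun t => if (S t).Infinite then S t else univ, fun t => ?_, fun t ht => if_pos ht⟩
  dsimp only
  split_ifs with h
  · exact h
  · exact infinite_univ

/-- The tree with stem `s` in which the immediate successors of a node `t` extending `s` are given
by `S t`. The values of `S` at nodes not extending `s` are irrelevant. -/
def laverTree (s : List ℕ) (S : List ℕ → Set ℕ) : Set (List ℕ) :=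
  {t | (t <+: s ∨ s <+: t) ∧ ∀ u i, s <+: u → u ++ [i] <+: t → i ∈ S u}

section LaverTree

variable {s t u : List ℕ} {S S' : List ℕ → Set ℕ}

lemma laverTree_mono (h : ∀ t, S t ⊆ S' t) : laverTree s S ⊆ laverTree s S' :=
  fun _ ht => ⟨ht.1, fun u i hu hi => h u (ht.2 u i hu hi)⟩

lemma mem_laverTree_of_prefix (ht : t ∈ laverTree s S) (hut : u <+: t) : u ∈ laverTree s S := by
  refine ⟨?_, fun v i hv hi => ht.2 v i hv (hi.trans hut)⟩
  rcases ht.1 with hts | hst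
  · exact .inl (hut.trans hts)
  · exact List.prefix_or_prefix_of_prefix hut hst

lemma stem_mem_laverTree (s : List ℕ) (S : List ℕ → Set ℕ) : s ∈ laverTree s S := by
  refine ⟨.inl List.prefix_rfl, fun u i hu hi => ?_⟩
  have hlen := hi.length_le.trans hu.length_le
  simp at hlen

lemma append_singleton_mem_laverTree (ht : t ∈ laverTree s S) (hst : s <+: t) {i : ℕ}
    (hi : i ∈ S t) : t ++ [i] ∈ laverTree s S := by
  refine ⟨.inr (hst.trans (List.prefix_append t [i])), fun u j hu hj => ?_⟩
  rcases List.prefix_concat_iff.1 hj with heq | hut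
  · obtain ⟨rfl, hji⟩ := List.append_inj' heq rfl
    exact List.singleton_injective hji ▸ hi
  · exact ht.2 u j hu hut

lemma isLaverTree_laverTree (s : List ℕ) (hS : ∀ t, (S t).Infinite) :
    IsLaverTree (laverTree s S) :=
  ⟨⟨⟨s, stem_mem_laverTree s S⟩, fun t ht n => mem_laverTree_of_prefix ht (t.take_prefix n)⟩,
    s, stem_mem_laverTree s S, fun _ ht => ht.1.symm,
    fun t ht hst => (hS t).mono fun _ hi => append_singleton_mem_laverTree ht hst hi⟩

lemma apply_mem_of_mem_treeBody_laverTree {y : ℕ → ℕ} (hy : y ∈ treeBody (laverTree s S)) {n : ℕ}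
    (hn : s.length ≤ n) : y n ∈ S (initSeg y n) := by
  refine (hy (n + 1)).2 (initSeg y n) (y n) ?_ (initSeg_succ y n ▸ List.prefix_rfl)
  rcases (hy n).1 with hns | hsn
  · exact (hns.eq_of_length_le (by simpa using hn)) ▸ List.prefix_rfl
  · exact hsn

lemma IsLaverTree.exists_laverTree_subset {P : Set (List ℕ)} (hP : IsLaverTree P) :
    ∃ s S, (∀ t, (S t).Infinite) ∧ laverTree s S ⊆ P := by
  obtain ⟨hT, s, hsP, -, hsucc⟩ := hP
  obtain ⟨S, hS, hSP⟩ := exists_forall_infinite_eq_of_infinite (succs P)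
  refine ⟨s, S, hS, fun t ht => ?_⟩
  induction t using List.reverseRecOn with
  | nil => exact hT.mem_of_prefix hsP List.nil_prefix
  | append_singleton u i ih =>
    by_cases hsu : s <+: u
    · have hu : u ∈ P := ih (mem_laverTree_of_prefix ht (List.prefix_append u [i]))
      have hi : i ∈ S u := ht.2 u i hsu List.prefix_rfl
      rwa [hSP u (hsucc u hu hsu)] at hi
    · have hus : u ++ [i] <+: s := by
        rcases ht.1 with h | h
        · exact h
        · exact ((List.prefix_concat_iff.1 h).resolve_right hsu) ▸ List.prefix_rfl
      exact hT.mem_of_prefix hsP hus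

end LaverTree

lemma mem_treeIdeal_of_forall_exists_inter_mem {𝕋 : Set (Set (List ℕ))} {A : Set (ℕ → ℕ)}
    (h : ∀ P ∈ 𝕋, ∃ Q ∈ 𝕋, Q ⊆ P ∧ treeBody Q ∩ A ∈ treeIdeal 𝕋) : A ∈ treeIdeal 𝕋 := by
  intro P hP
  obtain ⟨Q, hQ, hQP, hQA⟩ := h P hP
  obtain ⟨R, hR, hRQ, hRA⟩ := hQA Q hQ
  refine ⟨R, hR, hRQ.trans hQP, ?_⟩
  rwa [← inter_assoc, inter_eq_left.2 (treeBody_mono hRQ)] at hRA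

/-! ### Labellings by clopen subsets of the Cantor space -/

/-- A labelling of the pairs `(t, i)`, thought of as the edge from `t` to its immediate successor
`t ⌢ i`, by finite binary sequences. The label of `(t, i)` is encoded by its length `depth t i` and
an arbitrary point `center t i` of the Cantor space extending it. -/
structure CantorLabelling where
  center : List ℕ → ℕ → ℕ → Bool
  depth : List ℕ → ℕ → ℕ
  length_le_depth : ∀ t i, t.length ≤ depth t i
  finite_depth_lt : ∀ t N, {i | depth t i < N}.Finite

namespace CantorLabelling

/-- The basic clopen set determined by the label of `(t, i)`. -/
def label (Λ : CantorLabelling) (t : List ℕ) (i : ℕ) : Set (ℕ → Bool) :=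
  PiNat.cylinder (Λ.center t i) (Λ.depth t i)

/-- The sequences `y` all of whose labels from level `n₀` on are initial segments of `x`. -/
def fibre (Λ : CantorLabelling) (n₀ : ℕ) (x : ℕ → Bool) : Set (ℕ → ℕ) :=
  {y | ∀ n ≥ n₀, x ∈ Λ.label (initSeg y n) (y n)}

lemma eq_of_mem_fibre {Λ : CantorLabelling} {n₀ : ℕ} {x x' : ℕ → Bool} {y : ℕ → ℕ}
    (hx : y ∈ Λ.fibre n₀ x) (hx' : y ∈ Λ.fibre n₀ x') : x = x' := by
  funext j
  let n := max n₀ (j + 1)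
  have hj : j < Λ.depth (initSeg y n) (y n) := calc
    j < n := le_max_right n₀ (j + 1)
    _ = (initSeg y n).length := (length_initSeg y n).symm
    _ ≤ Λ.depth (initSeg y n) (y n) := Λ.length_le_depth _ _
  exact (hx n (le_max_left _ _) j hj).trans (hx' n (le_max_left _ _) j hj).symm

end CantorLabelling

lemma exists_center_depth_of_infinite {S : Set ℕ} (hS : S.Infinite) (N : ℕ) :
    ∃ (center : ℕ → ℕ → Bool) (depth : ℕ → ℕ), (∀ i, N ≤ depth i) ∧
      (∀ M, {i | depth i < M}.Finite) ∧
      ∀ x, {i ∈ S | x ∈ PiNat.cylinder (center i) (depth i)}.Infinite := by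
  obtain ⟨code⟩ := nonempty_embedding_nat (List Bool)
  let f (w : List Bool) : ℕ := hS.natEmbedding S (code w)
  have hf : Function.Injective f :=
    Subtype.val_injective.comp ((hS.natEmbedding S).injective.comp code.injective)
  let center : ℕ → ℕ → Bool := Function.extend f (fun w j => w.getD j false) fun _ _ => false
  let depth : ℕ → ℕ := fun i => max N (Function.extend f List.length id i)
  refine ⟨center, depth, fun i => le_max_left _ _, fun M => ?_, fun x => ?_⟩
  · refine (((List.finite_length_lt Bool M).image f).union (finite_lt_nat M)).subset fun i hi => ?_
    have hi : Function.extend f List.length id i < M := (le_max_right _ _).trans_lt hi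
    by_cases h : ∃ w, f w = i
    · obtain ⟨w, rfl⟩ := h
      exact .inl ⟨w, by rwa [hf.extend_apply] at hi, rfl⟩
    · exact .inr (by rwa [Function.extend_apply' _ _ _ h] at hi)
  · refine infinite_of_injective_forall_mem (f := fun n => f (initSeg x (N + n))) ?_ fun n => ?_
    · intro m n hmn
      simpa using congrArg List.length (hf hmn)
    · refine ⟨Subtype.coe_prop _, fun j hj => ?_⟩
      have hj : j < N + n := by simpa [depth, hf.extend_apply] using hj
      simp [center, hf.extend_apply, initSeg, hj]

lemma CantorLabelling.exists_infinite_setOf_mem_label {S : List ℕ → Set ℕ}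
    (hS : ∀ t, (S t).Infinite) :
    ∃ Λ : CantorLabelling, ∀ x t, {i ∈ S t | x ∈ Λ.label t i}.Infinite := by
  choose center depth hlen hfin hinf using fun t => exists_center_depth_of_infinite (hS t) t.length
  exact ⟨⟨center, depth, hlen, hfin⟩, fun x t => hinf t x⟩

lemma IsLaverTree.exists_forall_treeBody_subset_fibre {P : Set (List ℕ)} (hP : IsLaverTree P) :
    ∃ (Λ : CantorLabelling) (n₀ : ℕ), ∀ x, ∃ T, IsLaverTree T ∧ T ⊆ P ∧
      treeBody T ⊆ Λ.fibre n₀ x := by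
  obtain ⟨s, S, hS, hSP⟩ := hP.exists_laverTree_subset
  obtain ⟨Λ, hΛ⟩ := CantorLabelling.exists_infinite_setOf_mem_label hS
  refine ⟨Λ, s.length, fun x => ⟨laverTree s fun t => {i ∈ S t | x ∈ Λ.label t i},
    isLaverTree_laverTree s (hΛ x), (laverTree_mono fun t => sep_subset _ _).trans hSP, ?_⟩⟩
  exact fun y hy n hn => (apply_mem_of_mem_treeBody_laverTree hy hn).2

lemma mem_treeIdeal_of_mk_lt_continuum {X : Set (ℕ → ℕ)} (hX : #X < 𝔠) :
    X ∈ treeIdeal {T | IsLaverTree T} := by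
  intro P hP
  obtain ⟨Λ, n₀, hΛ⟩ := IsLaverTree.exists_forall_treeBody_subset_fibre hP
  choose T hT hTP hTΛ using hΛ
  by_contra! hmeets
  choose y hyT hyX using fun x => hmeets (T x) (hT x) (hTP x)
  have hinj : Function.Injective fun x => (⟨y x, hyX x⟩ : X) := by
    intro x x' hxx'
    have hy : y x = y x' := congrArg Subtype.val hxx'
    exact CantorLabelling.eq_of_mem_fibre (hTΛ x (hyT x)) (hTΛ x' (hy ▸ hyT x'))
  have hle : 𝔠 ≤ #X := by simpa using mk_le_of_injective hinj
  exact hle.not_gt hX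

lemma exists_forall_continuum_le_mk_treeBody_inter {L : Set (ℕ → ℕ)}
    (hL : L ∉ treeIdeal {T | IsLaverTree T}) :
    ∃ P, IsLaverTree P ∧ ∀ Q, IsLaverTree Q → Q ⊆ P → 𝔠 ≤ #(treeBody Q ∩ L : Set (ℕ → ℕ)) := by
  by_contra! h
  refine hL (mem_treeIdeal_of_forall_exists_inter_mem fun P hP => ?_)
  obtain ⟨Q, hQ, hQP, hQL⟩ := h P hP
  exact ⟨Q, hQ, hQP, mem_treeIdeal_of_mk_lt_continuum hQL⟩

/-! ### Thinning out infinite sets -/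

lemma exists_convergent_infinite_subset {X : Type*} [TopologicalSpace X] [SeqCompactSpace X]
    {S : Set ℕ} (hS : S.Infinite) (r : ℕ → X) :
    ∃ z, ∃ S' ⊆ S, S'.Infinite ∧ ∀ U ∈ 𝓝 z, {i ∈ S' | r i ∉ U}.Finite := by
  let e (n : ℕ) : ℕ := hS.natEmbedding S n
  have he : Function.Injective e := Subtype.val_injective.comp (hS.natEmbedding S).injective
  obtain ⟨z, φ, hφ, hz⟩ := SeqCompactSpace.tendsto_subseq (r ∘ e)
  refine ⟨z, range (e ∘ φ), ?_, infinite_range_of_injective (he.comp hφ.injective), fun U hU => ?_⟩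
  · rintro _ ⟨n, rfl⟩
    exact Subtype.coe_prop _
  · have hfin : {n | r (e (φ n)) ∉ U}.Finite := by
      have hev : ∀ᶠ n in Filter.cofinite, r (e (φ n)) ∈ U := Nat.cofinite_eq_atTop ▸ hz hU
      exact Filter.eventually_cofinite.1 hev
    refine (hfin.image (e ∘ φ)).subset ?_
    rintro _ ⟨⟨n, rfl⟩, hn⟩
    exact ⟨n, hn, rfl⟩

-- Hall's theorem applies to finite subsets of `E i` of size `encode i + 1`.
lemma exists_injective_forall_mem_of_infinite {ι α : Type*} [Countable ι] {E : ι → Set α}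
    (hE : ∀ i, (E i).Infinite) : ∃ f : ι → α, Function.Injective f ∧ ∀ i, f i ∈ E i := by
  classical
  obtain ⟨code⟩ := nonempty_embedding_nat ι
  choose F hFE hF using fun i => (hE i).exists_subset_card_eq (code i + 1)
  have hall (s : Finset ι) : s.card ≤ (s.biUnion F).card := by
    rcases s.eq_empty_or_nonempty with rfl | hs
    · simp
    obtain ⟨i, hi, hmax⟩ := s.exists_max_image code hs
    calc s.card = (s.map code).card := (Finset.card_map code).symm
      _ ≤ (Finset.range (code i + 1)).card := Finset.card_le_card fun k hk => by
        obtain ⟨j, hj, rfl⟩ := Finset.mem_map.1 hk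
        exact Finset.mem_range_succ_iff.2 (hmax j hj)
      _ = (F i).card := by rw [Finset.card_range, hF]
      _ ≤ (s.biUnion F).card := Finset.card_le_card (Finset.subset_biUnion_of_mem F hi)
  obtain ⟨f, hf, hfF⟩ := (Finset.all_card_le_biUnion_card_iff_exists_injective F).1 hall
  exact ⟨f, hf, fun i => hFE i (hfF i)⟩

lemma exists_infinite_subset_injOn_lt {α : Type*} {S : Set α} (hS : S.Infinite) {d : α → ℕ}
    {g : ℕ → ℕ} (hg : Function.Injective g) (hgS : (d '' S).Infinite → range g ⊆ d '' S) :
    ∃ S' ⊆ S, S'.Infinite ∧ ∃ N, InjOn d {i ∈ S' | N < d i} ∧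
      d '' {i ∈ S' | N < d i} ⊆ range g := by
  by_cases hd : (d '' S).Infinite
  · choose h hhS hh using fun n => hgS hd (mem_range_self n)
    have hdh : d ∘ h = g := funext hh
    refine ⟨range h, range_subset_iff.2 hhS, infinite_range_of_injective ?_, 0, ?_, ?_⟩
    · exact .of_comp (hdh ▸ hg)
    · rintro _ ⟨⟨m, rfl⟩, -⟩ _ ⟨⟨n, rfl⟩, -⟩ hmn
      rw [hg ((hh m).symm.trans (hmn.trans (hh n)))]
    · rintro _ ⟨_, ⟨⟨n, rfl⟩, -⟩, rfl⟩
      exact ⟨n, (hh n).symm⟩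
  · obtain ⟨N, hN⟩ := (not_infinite.1 hd).bddAbove
    have hempty : {i ∈ S | N < d i} = ∅ :=
      sep_eq_empty_iff_mem_false.2 fun i hi => (hN (mem_image_of_mem d hi)).not_gt
    exact ⟨S, Subset.rfl, hS, N, by simp [hempty], by simp [hempty]⟩

lemma exists_infinite_subsets_injOn_lt {ι α : Type*} [Countable ι] {S : ι → Set α}
    (hS : ∀ t, (S t).Infinite) (d : ι → α → ℕ) :
    ∃ (S' : ι → Set α) (N : ι → ℕ), (∀ t, S' t ⊆ S t) ∧ (∀ t, (S' t).Infinite) ∧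
      InjOn (fun p : ι × α => d p.1 p.2) {p | p.2 ∈ S' p.1 ∧ N p.1 < d p.1 p.2} := by
  obtain ⟨E, hE, hEd⟩ := exists_forall_infinite_eq_of_infinite fun t => d t '' S t
  obtain ⟨f, hf, hfE⟩ :=
    exists_injective_forall_mem_of_infinite (E := fun p : ι × ℕ => E p.1) fun p => hE p.1
  have hfS (t : ι) (h : (d t '' S t).Infinite) : range (fun n => f (t, n)) ⊆ d t '' S t := by
    rintro _ ⟨n, rfl⟩
    exact hEd t h ▸ hfE (t, n)
  choose S' hS'S hS' N hinj hrange using fun t =>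
    exists_infinite_subset_injOn_lt (hS t) (hf.comp (Prod.mk_right_injective t)) (hfS t)
  refine ⟨S', N, hS'S, hS', ?_⟩
  rintro ⟨t, i⟩ hi ⟨u, j⟩ hj (hij : d t i = d u j)
  obtain ⟨m, hm : f (t, m) = d t i⟩ := hrange t ⟨i, hi, rfl⟩
  obtain ⟨n, hn : f (u, n) = d u j⟩ := hrange u ⟨j, hj, rfl⟩
  obtain rfl : t = u := congrArg Prod.fst (hf (hm.trans (hij.trans hn.symm)))
  exact congrArg (Prod.mk t) (hinj t hi hj hij)

/-! ### Branches guided by points of the Cantor space -/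

lemma firstDiff_eq_of_mem_cylinder {E : ℕ → Type*} {x a b : ∀ n, E n} (hab : a ≠ b)
    (hx : x ∈ PiNat.cylinder a (PiNat.firstDiff a b + 1)) :
    PiNat.firstDiff a b = PiNat.firstDiff x b := by
  have hne : x (PiNat.firstDiff a b) ≠ b (PiNat.firstDiff a b) :=
    hx _ (Nat.lt_succ_self _) ▸ PiNat.apply_firstDiff_ne hab
  have hxb : x ≠ b := fun h => hne (congrFun h _)
  apply le_antisymm
  · refine (PiNat.mem_cylinder_iff_le_firstDiff hxb _).1 fun i hi => ?_
    exact (hx i (hi.trans (Nat.lt_succ_self _))).trans (PiNat.apply_eq_of_lt_firstDiff hi)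
  · by_contra! hlt
    exact hne (PiNat.apply_eq_of_lt_firstDiff hlt)

lemma exists_firstDiff_succ_eq {E : ℕ → Type*} {w : ℕ → ∀ n, E n} {x : ∀ n, E n} {m : ℕ}
    (hxw : x ≠ w m) (hlim : ∀ n ≥ m, x ∈ PiNat.cylinder (w n) n)
    (hsucc : ∀ n ≥ m, x ∈ PiNat.cylinder (w (n + 1)) (PiNat.firstDiff (w (n + 1)) (w n) + 1)) :
    ∃ n ≥ m, w n = w m ∧ PiNat.firstDiff (w (n + 1)) (w n) = PiNat.firstDiff x (w n) := by
  obtain ⟨n, hmn, hn, hne⟩ : ∃ n ≥ m, w n = w m ∧ w (n + 1) ≠ w m := by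
    by_contra! hconst
    have hw : ∀ n ≥ m, w n = w m := fun n hn =>
      Nat.le_induction rfl (fun n hn ih => hconst n hn ih) n hn
    refine hxw (funext fun j => ?_)
    have hj : m ≤ m + j + 1 := by omega
    rw [← hw _ hj]
    exact hlim _ hj j (by omega)
  exact ⟨n, hmn, hn, firstDiff_eq_of_mem_cylinder (hn ▸ hne) (hsucc n hmn)⟩

/-- The place where the point `z (t ⌢ i)` attached to an immediate successor of `t` departs from
`z t`; it is the junk value `0` if the two points coincide. -/
noncomputable def jump (z : List ℕ → ℕ → Bool) (t : List ℕ) (i : ℕ) : ℕ :=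
  PiNat.firstDiff (z (t ++ [i])) (z t)

/-- The precision up to which a point `x` has to agree with `z t` before a branch guided by `x` may
pass through the node `t`: it exceeds the length of `t`, the given bound `N t`, and the place of the
jump from the predecessor `t.dropLast` of `t`. -/
noncomputable def precision (z : List ℕ → ℕ → Bool) (N : List ℕ → ℕ) (t : List ℕ) : ℕ :=
  t.length + N t + PiNat.firstDiff (z t) (z t.dropLast) + 1

section Guided

variable {z : List ℕ → ℕ → Bool} {N : List ℕ → ℕ} {S : List ℕ → Set ℕ} {x : ℕ → Bool} {n₁ : ℕ}

lemma jump_lt_precision (t : List ℕ) (i : ℕ) : jump z t i < precision z N (t ++ [i]) := by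
  simp only [jump, precision, List.dropLast_concat]
  omega

lemma exists_jump_eq_firstDiff (hxz : ∀ t, x ≠ z t) {y : ℕ → ℕ}
    (hyz : ∀ n ≥ n₁, x ∈ PiNat.cylinder (z (initSeg y n)) (precision z N (initSeg y n)))
    {m : ℕ} (hm : n₁ ≤ m) :
    ∃ n ≥ m, N (initSeg y n) < jump z (initSeg y n) (y n) ∧
      jump z (initSeg y n) (y n) = PiNat.firstDiff x (z (initSeg y m)) := by
  have hlen (n : ℕ) : n ≤ precision z N (initSeg y n) := by
    simp only [precision, length_initSeg]
    omega
  have hjump (n : ℕ) : PiNat.firstDiff (z (initSeg y (n + 1))) (z (initSeg y n)) =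
      jump z (initSeg y n) (y n) := by rw [initSeg_succ, jump]
  obtain ⟨n, hmn, hn, hdiff⟩ := exists_firstDiff_succ_eq (w := fun n => z (initSeg y n)) (hxz _)
    (fun n hn => PiNat.cylinder_anti _ (hlen n) (hyz n (hm.trans hn)))
    (fun n hn => PiNat.cylinder_anti _
      (by rw [hjump, initSeg_succ]; exact jump_lt_precision _ _)
      (hyz (n + 1) (by omega)))
  rw [hjump] at hdiff
  refine ⟨n, hmn, ?_, hn ▸ hdiff⟩
  calc N (initSeg y n) < precision z N (initSeg y n) := by simp only [precision]; omega
    _ ≤ PiNat.firstDiff x (z (initSeg y n)) :=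
      (PiNat.mem_cylinder_iff_le_firstDiff (hxz _) _).1 (hyz n (hm.trans hmn))
    _ = jump z (initSeg y n) (y n) := hdiff.symm

-- Two such branches that first differ at `m` would leave the common value `z (y ↾ m)` with the same
-- jump, hence at the same node and towards the same successor, although this happens after `m`.
lemma countable_of_injOn_jump
    (hinj : InjOn (fun p : List ℕ × ℕ => jump z p.1 p.2)
      {p | p.2 ∈ S p.1 ∧ N p.1 < jump z p.1 p.2})
    (hxz : ∀ t, x ≠ z t) {Y : Set (ℕ → ℕ)}
    (hYS : ∀ y ∈ Y, ∀ n ≥ n₁, y n ∈ S (initSeg y n))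
    (hYz : ∀ y ∈ Y, ∀ n ≥ n₁,
      x ∈ PiNat.cylinder (z (initSeg y n)) (precision z N (initSeg y n))) :
    Y.Countable := by
  suffices hstem : InjOn (fun y => initSeg y n₁) Y from
    (mapsTo_univ _ _).countable_of_injOn hstem (to_countable _)
  intro y hy y' hy' (hyy' : initSeg y n₁ = initSeg y' n₁)
  by_contra hne
  let m := PiNat.firstDiff y y'
  have hmn₁ : n₁ ≤ m := (PiNat.mem_cylinder_iff_le_firstDiff hne n₁).1
    (initSeg_eq_initSeg_iff.1 hyy')
  have hm : initSeg y m = initSeg y' m :=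
    initSeg_eq_initSeg_iff.2 fun i hi => PiNat.apply_eq_of_lt_firstDiff hi
  obtain ⟨n, hmn, hN, hjump⟩ := exists_jump_eq_firstDiff hxz (hYz y hy) hmn₁
  obtain ⟨n', hmn', hN', hjump'⟩ := exists_jump_eq_firstDiff hxz (hYz y' hy') hmn₁
  rw [← hm] at hjump'
  obtain ⟨hnode, hval⟩ : initSeg y n = initSeg y' n' ∧ y n = y' n' := Prod.mk_inj.1 <|
    hinj ⟨hYS y hy n (hmn₁.trans hmn), hN⟩ ⟨hYS y' hy' n' (hmn₁.trans hmn'), hN'⟩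
      (hjump.trans hjump'.symm)
  obtain rfl : n = n' := by simpa using congrArg List.length hnode
  have hsucc : initSeg y (n + 1) = initSeg y' (n + 1) := by
    rw [initSeg_succ, initSeg_succ, hnode, hval]
  exact PiNat.apply_firstDiff_ne hne (initSeg_eq_initSeg_iff.1 hsucc m (by omega))

end Guided

lemma CantorLabelling.exists_isLaverTree_countable_inter_fibre (Λ : CantorLabelling) (n₀ : ℕ)
    {P : Set (List ℕ)} (hP : IsLaverTree P) :
    ∃ (Q : Set (List ℕ)) (C : Set (ℕ → Bool)), IsLaverTree Q ∧ Q ⊆ P ∧ C.Countable ∧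
      ∀ x ∉ C, (treeBody Q ∩ Λ.fibre n₀ x).Countable := by
  obtain ⟨s, S, hS, hSP⟩ := hP.exists_laverTree_subset
  choose z S₁ hS₁S hS₁ hz using fun t => exists_convergent_infinite_subset (hS t) (Λ.center t)
  obtain ⟨S₂, N, hS₂S₁, hS₂, hinj⟩ := exists_infinite_subsets_injOn_lt hS₁ (jump z)
  let near (t : List ℕ) : Set (ℕ → Bool) := PiNat.cylinder (z t) (precision z N t)
  let S₃ (t : List ℕ) : Set ℕ :=
    (S₂ t \ {i ∈ S₁ t | Λ.center t i ∉ near t}) \ {i | Λ.depth t i < precision z N t}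
  have hS₃S₂ (t : List ℕ) : S₃ t ⊆ S₂ t := sdiff_subset.trans sdiff_subset
  have hS₃ (t : List ℕ) : (S₃ t).Infinite := by
    have hnear : near t ∈ 𝓝 (z t) :=
      (PiNat.isOpen_cylinder _ _ _).mem_nhds (PiNat.self_mem_cylinder _ _)
    exact ((hS₂ t).sdiff (hz t _ hnear)).sdiff (Λ.finite_depth_lt t _)
  have hlabel {t : List ℕ} {i : ℕ} (hi : i ∈ S₃ t) {x : ℕ → Bool} (hx : x ∈ Λ.label t i) :
      x ∈ near t := by
    have hcenter : Λ.center t i ∈ near t := by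
      by_contra hfar
      exact hi.1.2 ⟨hS₂S₁ t hi.1.1, hfar⟩
    exact fun j hj => (hx j (hj.trans_le (not_lt.1 hi.2))).trans (hcenter j hj)
  refine ⟨laverTree s S₃, range z, isLaverTree_laverTree s hS₃,
    (laverTree_mono fun t => (hS₃S₂ t).trans ((hS₂S₁ t).trans (hS₁S t))).trans hSP,
    countable_range z, fun x hx => ?_⟩
  have hmem : ∀ y ∈ treeBody (laverTree s S₃) ∩ Λ.fibre n₀ x, ∀ n ≥ max s.length n₀,
      y n ∈ S₃ (initSeg y n) := fun y hy n hn =>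
    apply_mem_of_mem_treeBody_laverTree hy.1 ((le_max_left _ _).trans hn)
  exact countable_of_injOn_jump hinj (fun t h => hx ⟨t, h.symm⟩)
    (fun y hy n hn => hS₃S₂ _ (hmem y hy n hn))
    (fun y hy n hn => hlabel (hmem y hy n hn) (hy.2 n ((le_max_right _ _).trans hn)))

/-! ### Transfinite selection -/

section Cardinality

universe u

variable {ι α : Type u} {κ : Cardinal.{u}}

lemma mk_biUnion_lt_of_countable (hκ : ℵ₀ < κ) {s : Set ι} (hs : #s < κ) {f : ι → Set α}
    (hf : ∀ i ∈ s, (f i).Countable) : #(⋃ i ∈ s, f i) < κ := by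
  refine (mk_biUnion_le f s).trans_lt (mul_lt_of_lt hκ.le hs ?_)
  exact (ciSup_le' fun i : s => le_aleph0_iff_set_countable.2 (hf i i.2)).trans_lt hκ

lemma le_mk_sdiff_biUnion_of_countable_inter {X : Type u} (hκ : ℵ₀ < κ) (hX : κ ≤ #X)
    {L : Set α} {T : X → Set α} (hT : ∀ x, κ ≤ #(T x ∩ L : Set α))
    {B : ι → Set α} {C : ι → Set X} (hC : ∀ i, (C i).Countable)
    (hBT : ∀ i, ∀ x ∉ C i, (B i ∩ T x).Countable) {s : Set ι} (hs : #s < κ) :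
    κ ≤ #(L \ ⋃ i ∈ s, B i : Set α) := by
  obtain ⟨x, -, hx⟩ : (Set.univ \ ⋃ i ∈ s, C i).Nonempty := by
    apply sdiff_nonempty_of_mk_lt_mk
    rw [mk_univ]
    exact (mk_biUnion_lt_of_countable hκ hs fun i _ => hC i).trans_le hX
  have hxC : ∀ i ∈ s, x ∉ C i := by simpa only [mem_iUnion, not_exists] using hx
  have hcover : T x ∩ L ⊆ (L \ ⋃ i ∈ s, B i) ∪ ⋃ i ∈ s, (B i ∩ T x) := by
    rintro a ⟨haT, haL⟩
    by_cases ha : ∃ i ∈ s, a ∈ B i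
    · obtain ⟨i, hi, hai⟩ := ha
      exact .inr (mem_biUnion hi ⟨hai, haT⟩)
    · exact .inl ⟨haL, by simpa only [mem_iUnion₂, exists_prop] using ha⟩
  have hsmall : #(⋃ i ∈ s, (B i ∩ T x) : Set α) < κ :=
    mk_biUnion_lt_of_countable hκ hs fun i hi => hBT i x (hxC i hi)
  by_contra! hlt
  exact ((hT x).trans (mk_le_mk_of_subset hcover)).not_gt
    ((mk_union_le _ _).trans_lt (add_lt_of_lt hκ.le hlt hsmall))

lemma exists_subset_mk_eq_forall_mk_inter_lt (hκ : ℵ₀ ≤ κ) (hι : #ι ≤ κ) {L : Set α}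
    {B : ι → Set α} (h : ∀ s : Set ι, #s < κ → κ ≤ #(L \ ⋃ i ∈ s, B i : Set α)) :
    ∃ A ⊆ L, #A = κ ∧ ∀ i, #(A ∩ B i : Set α) < κ := by
  obtain ⟨_, _, hord⟩ := exists_ord_eq_type_lt κ.out
  have hIio (w : κ.out) : #(Iio w) < κ := by simpa using mk_Iio_lt w hord
  have hIic (w : κ.out) : #(Iic w) < κ := by simpa using mk_Iic_lt w hord (by simpa)
  obtain ⟨e⟩ : Nonempty (ι ↪ κ.out) := by rwa [← Cardinal.le_def, mk_out]
  have hstep (w : κ.out) (a : Iio w → α) :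
      ∃ b ∈ L, b ∉ range a ∧ ∀ i, e i ≤ w → b ∉ B i := by
    have hs : #(e ⁻¹' Iic w) < κ := (mk_preimage_of_injective _ _ e.injective).trans_lt (hIic w)
    have hlt : #(range a) < #(L \ ⋃ i ∈ e ⁻¹' Iic w, B i : Set α) :=
      (mk_range_le.trans_lt (hIio w)).trans_le (h _ hs)
    obtain ⟨b, ⟨hbL, hbB⟩, hba⟩ := sdiff_nonempty_of_mk_lt_mk hlt
    exact ⟨b, hbL, hba, fun i hi hbi => hbB (mem_biUnion (show i ∈ e ⁻¹' Iic w from hi) hbi)⟩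
  choose next hL hnew hB using hstep
  let a : κ.out → α := wellFounded_lt.fix fun w prev => next w fun v => prev v v.2
  have ha (w : κ.out) : a w = next w fun v => a v := WellFounded.fix_eq _ _ _
  have hinj : Function.Injective a := .of_lt_imp_ne fun v w hvw heq =>
    hnew w (fun v => a v) ⟨⟨v, hvw⟩, heq.trans (ha w)⟩
  refine ⟨range a, ?_, ?_, fun i => ?_⟩
  · rintro _ ⟨w, rfl⟩
    exact ha w ▸ hL w _
  · rw [mk_range_eq a hinj, mk_out]
  · have hsub : range a ∩ B i ⊆ a '' Iio (e i) := by
      rintro _ ⟨⟨w, rfl⟩, hw⟩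
      refine mem_image_of_mem a (mem_Iio.2 (lt_of_not_ge fun hiw => ?_))
      exact hB w (fun v => a v) i hiw (ha w ▸ hw)
    exact (mk_le_mk_of_subset hsub).trans_lt (mk_image_le.trans_lt (hIio (e i)))

end Cardinality

lemma exists_subset_mem_treeIdeal_of_notMem {L : Set (ℕ → ℕ)}
    (hL : L ∉ treeIdeal {T | IsLaverTree T}) :
    ∃ A ⊆ L, #A = 𝔠 ∧ A ∈ treeIdeal {T | IsLaverTree T} := by
  obtain ⟨P, hP, hlarge⟩ := exists_forall_continuum_le_mk_treeBody_inter hL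
  obtain ⟨Λ, n₀, hΛ⟩ := hP.exists_forall_treeBody_subset_fibre
  choose T hT hTP hTΛ using hΛ
  choose Q C hQ hQR hC hQC using fun R : {R // IsLaverTree R} =>
    Λ.exists_isLaverTree_countable_inter_fibre n₀ R.2
  obtain ⟨A, hAL, hAc, hA⟩ := exists_subset_mk_eq_forall_mk_inter_lt
    (κ := 𝔠) (L := L) (B := fun R => treeBody (Q R)) aleph0_le_continuum
    ((mk_subtype_le _).trans (by simp)) fun s hs =>
      le_mk_sdiff_biUnion_of_countable_inter aleph0_lt_continuum (by simp)
        (fun x => hlarge (T x) (hT x) (hTP x)) hC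
        (fun R x hx => (hQC R x hx).mono (inter_subset_inter_right _ (hTΛ x))) hs
  refine ⟨A, hAL, hAc, mem_treeIdeal_of_forall_exists_inter_mem fun R hR => ?_⟩
  refine ⟨Q ⟨R, hR⟩, hQ ⟨R, hR⟩, hQR ⟨R, hR⟩, mem_treeIdeal_of_mk_lt_continuum ?_⟩
  rw [inter_comm]
  exact hA ⟨R, hR⟩

/-- there is no l₀-Luzin set. -/
theorem stmt10 :
    ∀ L : Set (ℕ → ℕ), ∃ A ∈ treeIdeal {T | IsLaverTree T},
      Cardinal.mk ↑(A ∩ L) = Cardinal.mk ↑L := by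
  intro L
  by_cases hL : L ∈ treeIdeal {T | IsLaverTree T}
  · exact ⟨L, hL, by rw [inter_self]⟩
  · obtain ⟨A, hAL, hAc, hA⟩ := exists_subset_mem_treeIdeal_of_notMem hL
    have hLc : #L ≤ 𝔠 := (mk_set_le L).trans (by simp)
    refine ⟨A, hA, ?_⟩
    rw [inter_eq_left.2 hAL]
    exact (mk_le_mk_of_subset hAL).antisymm (hAc ▸ hLc)
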